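/- Let q, a, b, c, d, z be complex numbers with q, a, b, c, d nonzero, let x = (z + z^{−1})/2, and let n ≥ 2. Define D_m(α,β) = α^{m(m−1)/2} β^{m(m+1)/2} q^{m(m−1)(2m−1)/6} ∏_{i=0}^{m−1} (αβ;q)_i (cd;q)_i (q;q)_i / (αβcd;q)_{m+i}. Assume all q-shifted factorials appearing in denominators (in the D's and in the Askey-Wilson polynomials below) are nonzero and that 1 − abcd ≠ 0, 1 − abq ≠ 0. Then D_n(a,b) D_{n−2}(aq,bq) p_n(x; a,b,c,d; q) p_{n−2}(x; aq,bq,c,d; q) = [(ab;q)_2 / (abcd;q)_2] · D_{n−1}(a,b) D_{n−1}(aq,bq) p_{n−1}(x; a,b,c,d; q) p_{n−1}(x; aq,bq,c,d; q) − [(1−ab)/(1−abcd)]^n [(1−abcdq)/(1−abq)]^{n−2} · D_{n−1}(aq,b) D_{n−1}(a,bq) p_{n−1}(x; a,bq,c,d; q) p_{n−1}(x; aq,b,c,d; q). -/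

import Mathlib

/-!
The relation is an elimination among three contiguous relations for terminating `₄φ₃` series.

Write `S_m(α, β)` for the `₄φ₃` sum in `p_m(x; α, β, c, d; q)` and `w = (1 - a z)(1 - a / z)`. Then

* `S_n(a, b) = S_{n-1}(a, bq) + K₂ w S_{n-1}(aq, bq)`,
* `S_{n-1}(a, b) = S_{n-1}(a, bq) + K₃ w S_{n-2}(aq, bq)`,
* `S_{n-1}(aq, b) = l S_{n-1}(aq, bq) + m S_{n-2}(aq, bq)`,

with coefficients free of `z`. The first two are instances of `phi_contig_two` (the second after
exchanging the two numerator parameters `q ^ (-n)` and `abcd q ^ (n - 1)`), the third of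
`phi_contig_one`; both lemmas hold term by term. The coefficients satisfy `K₂ m = -K₃ l`, so `w`
cancels from the combination
`l S_{n-1}(a, b) S_{n-1}(aq, bq) + m S_n(a, b) S_{n-2}(aq, bq) = S_{n-1}(a, bq) S_{n-1}(aq, b)`.

It remains to compare the normalizations: `Dfac_cross` and `awPre_cross` express the product for
`(aq, b), (a, bq)` in degree `n - 1` through that for `(a, b), (aq, bq)`, and `Dfac_awPre_ratio`
does the same for the degrees `n, n - 2`. The last ratio contains the factor `1 - c d q ^ (n - 2)`,
which also occurs in `m` and may vanish; the final combination `eliminate` therefore divides by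
neither.
-/

/-- The q-shifted factorial `(a;q)_n = ∏_{k=0}^{n-1} (1 - a q^k)`. -/
noncomputable def qPoch (q a : ℂ) (n : ℕ) : ℂ := ∏ k ∈ Finset.range n, (1 - a * q ^ k)

/-- The Askey-Wilson polynomial evaluated at `x = (z + z⁻¹)/2`. -/
noncomputable def awPoly (q a b c d z : ℂ) (n : ℕ) : ℂ :=
  a ^ (-(n : ℤ)) * (qPoch q (a * b) n * qPoch q (a * c) n * qPoch q (a * d) n) *
    ∑ k ∈ Finset.range (n + 1),
      qPoch q (q ^ (-(n : ℤ))) k * qPoch q (a * b * c * d * q ^ ((n : ℤ) - 1)) k *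
        qPoch q (a * z) k * qPoch q (a / z) k * q ^ k /
      (qPoch q q k * qPoch q (a * b) k * qPoch q (a * c) k * qPoch q (a * d) k)

/-- The normalizing factor `D_m(α,β)` of Theorem 3.1 (with `q, c, d` fixed). -/
noncomputable def Dfac (q c d α β : ℂ) (m : ℕ) : ℂ :=
  α ^ (m * (m - 1) / 2) * β ^ (m * (m + 1) / 2) * q ^ (m * (m - 1) * (2 * m - 1) / 6) *
    ∏ i ∈ Finset.range m,
      qPoch q (α * β) i * qPoch q (c * d) i * qPoch q q i / qPoch q (α * β * c * d) (m + i)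

/-! ### Shifted factorials -/

theorem qPoch_zero (q a : ℂ) : qPoch q a 0 = 1 := by simp [qPoch]

theorem qPoch_succ (q a : ℂ) (k : ℕ) :
    qPoch q a (k + 1) = qPoch q a k * (1 - a * q ^ k) := by
  simp [qPoch, Finset.prod_range_succ]

/-- Splitting off the first factor, where `qPoch_succ` splits off the last. -/
theorem qPoch_succ' (q a : ℂ) (k : ℕ) :
    qPoch q a (k + 1) = (1 - a) * qPoch q (a * q) k := by
  simp only [qPoch, Finset.prod_range_succ', pow_zero, mul_one]
  rw [mul_comm]
  congr 1
  refine Finset.prod_congr rfl fun i _ => ?_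
  ring

theorem qPoch_shift (q a : ℂ) (k : ℕ) (h : 1 - a ≠ 0) :
    qPoch q (a * q) k = qPoch q a k * (1 - a * q ^ k) / (1 - a) := by
  rw [eq_div_iff h, ← qPoch_succ, qPoch_succ', mul_comm]

theorem qPoch_ne_of_le {q a : ℂ} {j k : ℕ} (hjk : j ≤ k) (h : qPoch q a k ≠ 0) :
    qPoch q a j ≠ 0 := by
  simp only [qPoch, Finset.prod_ne_zero_iff, Finset.mem_range] at h ⊢
  exact fun i hi => h i (by omega)

theorem one_sub_ne {q a : ℂ} {j k : ℕ} (hjk : j < k) (h : qPoch q a k ≠ 0) :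
    1 - a * q ^ j ≠ 0 := by
  simp only [qPoch, Finset.prod_ne_zero_iff, Finset.mem_range] at h
  exact h j hjk

theorem qPoch_eq_zero {q a : ℂ} {j k : ℕ} (hjk : j < k) (h : a * q ^ j = 1) :
    qPoch q a k = 0 := by
  refine Finset.prod_eq_zero (Finset.mem_range.2 hjk) ?_
  rw [h, sub_self]

/-! ### Contiguous relations for terminating series -/

/-- The `k`-th term of the basic hypergeometric series `₄φ₃(P, F, u, v; A, C, D; q, q)`. -/
noncomputable def term (q P F A C D u v : ℂ) (k : ℕ) : ℂ :=
  qPoch q P k * qPoch q F k * qPoch q u k * qPoch q v k * q ^ k /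
    (qPoch q q k * qPoch q A k * qPoch q C k * qPoch q D k)

/-- The partial sum, over `k < N`, of `₄φ₃(P, F, u, v; A, C, D; q, q)`. For `P = q ^ (-n)` and
`N > n` it is the whole terminating series. -/
noncomputable def phi (q P F A C D u v : ℂ) (N : ℕ) : ℂ :=
  ∑ k ∈ Finset.range N, term q P F A C D u v k

theorem phi_swap (q P F A C D u v : ℂ) (N : ℕ) :
    phi q P F A C D u v N = phi q F P A C D u v N := by
  refine Finset.sum_congr rfl fun k _ => ?_
  simp only [term]
  ring

/-- Once `P` is a power `q ^ (-j)` with `j < N`, adding the term of index `N` changes nothing. -/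
theorem phi_succ_of_zero {q P : ℂ} (F A C D u v : ℂ) {j N : ℕ} (hj : j < N)
    (h : P * q ^ j = 1) : phi q P F A C D u v (N + 1) = phi q P F A C D u v N := by
  simp [phi, Finset.sum_range_succ, term, qPoch_eq_zero hj h]

/-- Replacing `(P, A)` by `(P q, A q)` changes the series by a multiple of the series with all
parameters shifted. The identity holds term by term: the difference of the terms of index `k + 1`
is a multiple of the fully shifted term of index `k`, and the terms of index `0` agree. No
balancing condition on the parameters is involved. -/
theorem phi_contig_two {q P F A C D u v : ℂ} {N : ℕ}
    (hq : qPoch q q N ≠ 0) (hA : qPoch q A (N + 1) ≠ 0) (hA1 : 1 - A * q ≠ 0)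
    (hC : qPoch q C (N + 1) ≠ 0) (hD : qPoch q D (N + 1) ≠ 0) :
    phi q P F A C D u v (N + 1) = phi q (P * q) F (A * q) C D u v (N + 1) +
      q * (A - P) * (1 - F) / ((1 - A) * (1 - A * q) * (1 - C) * (1 - D)) *
        ((1 - u) * (1 - v)) *
        phi q (P * q) (F * q) (A * q * q) (C * q) (D * q) (u * q) (v * q) N := by
  simp only [phi, Finset.sum_range_succ', Finset.mul_sum]
  rw [add_right_comm, ← Finset.sum_add_distrib]
  congr 1
  · refine Finset.sum_congr rfl fun k hk => ?_
    have hk := Finset.mem_range.1 hk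
    have q0 := qPoch_ne_of_le (show k ≤ N by omega) hq
    have q1 : 1 - q * q ^ k ≠ 0 := one_sub_ne hk hq
    have A0 : 1 - A ≠ 0 := by simpa using one_sub_ne (show 0 < N + 1 by omega) hA
    have C0 : 1 - C ≠ 0 := by simpa using one_sub_ne (show 0 < N + 1 by omega) hC
    have D0 : 1 - D ≠ 0 := by simpa using one_sub_ne (show 0 < N + 1 by omega) hD
    have A1 : 1 - A * q * q ^ k ≠ 0 := by
      have := one_sub_ne (show k + 1 < N + 1 by omega) hA
      rwa [pow_succ', ← mul_assoc] at this
    have A2 := qPoch_ne_of_le (show k + 1 ≤ N + 1 by omega) hA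
    have C2 := qPoch_ne_of_le (show k + 1 ≤ N + 1 by omega) hC
    have D2 := qPoch_ne_of_le (show k + 1 ≤ N + 1 by omega) hD
    rw [qPoch_succ'] at A2 C2 D2
    have A3 := right_ne_zero_of_mul A2
    have C3 := right_ne_zero_of_mul C2
    have D3 := right_ne_zero_of_mul D2
    simp only [term]
    rw [qPoch_shift q (A * q) k hA1, qPoch_succ q q, qPoch_succ' q P, qPoch_succ' q F,
      qPoch_succ' q A, qPoch_succ' q C, qPoch_succ' q D, qPoch_succ' q u, qPoch_succ' q v,
      qPoch_succ q (P * q), qPoch_succ q (A * q), pow_succ]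
    generalize qPoch q (A * q) k = a1 at *
    generalize qPoch q (C * q) k = a2 at *
    generalize qPoch q (D * q) k = a3 at *
    generalize qPoch q q k = a4 at *
    generalize q ^ k = y at *
    generalize qPoch q (P * q) k = a5 at *
    generalize qPoch q (F * q) k = a6 at *
    generalize qPoch q (u * q) k = a7 at *
    generalize qPoch q (v * q) k = a8 at *
    clear hq hA hC hD
    -- The denominators are kept as atoms until fractions are cleared.
    obtain ⟨g1, hg1⟩ : ∃ g, g = 1 - A * q := ⟨_, rfl⟩
    obtain ⟨g2, hg2⟩ : ∃ g, g = 1 - A * q * y := ⟨_, rfl⟩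
    obtain ⟨g3, hg3⟩ : ∃ g, g = 1 - q * y := ⟨_, rfl⟩
    rw [← hg1] at hA1 ⊢
    rw [← hg2] at A1 ⊢
    rw [← hg3] at q1 ⊢
    field_simp
    subst hg1 hg2 hg3
    ring

/-- Partial fractions in `q ^ k`: the factor `1 - A q ^ k` is a combination of `1 - F q ^ k` and
`1 - P q ^ k`, and each of these shifts one numerator parameter. -/
theorem phi_contig_one {q P F A C D u v : ℂ} {N : ℕ} (hPF : P - F ≠ 0)
    (hA : qPoch q A (N + 1) ≠ 0) :
    phi q P F A C D u v N =
      (1 - F) * (P - A) / ((1 - A) * (P - F)) * phi q P (F * q) (A * q) C D u v N +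
      (1 - P) * (F - A) / ((1 - A) * (F - P)) * phi q (P * q) F (A * q) C D u v N := by
  have hFP : F - P ≠ 0 := by rwa [← neg_sub, neg_ne_zero]
  simp only [phi, Finset.mul_sum]
  rw [← Finset.sum_add_distrib]
  refine Finset.sum_congr rfl fun k hk => ?_
  have hk := Finset.mem_range.1 hk
  have A0 : 1 - A ≠ 0 := by simpa using one_sub_ne (show 0 < N + 1 by omega) hA
  have A1 := qPoch_ne_of_le (show k ≤ N + 1 by omega) hA
  have A2 := one_sub_ne (show k < N + 1 by omega) hA
  have hP : (1 - P) * qPoch q (P * q) k = qPoch q P k * (1 - P * q ^ k) := by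
    rw [← qPoch_succ, qPoch_succ']
  have hF : (1 - F) * qPoch q (F * q) k = qPoch q F k * (1 - F * q ^ k) := by
    rw [← qPoch_succ, qPoch_succ']
  simp only [term]
  rw [qPoch_shift q A k A0]
  rw [show ∀ x y z r s t l m, (1 - F) * (P - A) / x * (y * qPoch q (F * q) k * z * r * s / t)
      + (1 - P) * (F - A) / l * (qPoch q (P * q) k * m * z * r * s / t) =
      (P - A) / x * (y * ((1 - F) * qPoch q (F * q) k) * z * r * s / t)
      + (F - A) / l * (((1 - P) * qPoch q (P * q) k) * m * z * r * s / t) by intros; ring, hP, hF]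
  have key : 1 / qPoch q A k = ((P - A) / ((1 - A) * (P - F)) * (1 - F * q ^ k) +
      (F - A) / ((1 - A) * (F - P)) * (1 - P * q ^ k)) /
        (qPoch q A k * (1 - A * q ^ k) / (1 - A)) := by
    rw [← neg_sub P F]
    generalize q ^ k = y at *
    field_simp
    ring
  rw [show ∀ x y z, qPoch q P k * qPoch q F k * qPoch q u k * qPoch q v k * q ^ k /
    (x * qPoch q A k * y * z) = qPoch q P k * qPoch q F k * qPoch q u k * qPoch q v k * q ^ k /
    (x * y * z) * (1 / qPoch q A k) by intros; field_simp, key]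
  generalize (1 - A) * (P - F) = r1
  generalize (1 - A) * (F - P) = r2
  generalize qPoch q A k * (1 - A * q ^ k) / (1 - A) = r3
  ring

/-! ### The normalizing factors -/

theorem triangular_succ (m : ℕ) : (m + 1) * m / 2 = m * (m - 1) / 2 + m := by
  rw [show (m + 1) * m = m * (m - 1) + 2 * m by
    cases m with
    | zero => rfl
    | succ k => rw [Nat.add_sub_cancel]; ring]
  omega

/-- The exponent of `q` in `Dfac` is the sum of squares `0² + ⋯ + (m - 1)²`. -/
theorem pyramidal_succ (m : ℕ) : (m + 1) * m * (2 * (m + 1) - 1) / 6 =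
    m * (m - 1) * (2 * m - 1) / 6 + m * m := by
  have : (m + 1) * m * (2 * (m + 1) - 1) = m * (m - 1) * (2 * m - 1) + 6 * (m * m) := by
    cases m with
    | zero => simp
    | succ k =>
      rw [show 2 * (k + 1 + 1) - 1 = 2 * k + 3 by omega, show 2 * (k + 1) - 1 = 2 * k + 1 by omega]
      simp only [Nat.add_sub_cancel]
      ring
  rw [this]
  omega

/-- Moving the window `[m, 2m)` to `[m + 1, 2m + 2)` drops the index `m` and gains `2m`, `2m + 1`. -/
theorem prod_window_succ (p : ℕ → ℂ) (m : ℕ) :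
    (∏ i ∈ Finset.range (m + 1), p (m + 1 + i)) * p m =
      (∏ i ∈ Finset.range m, p (m + i)) * (p (2 * m) * p (2 * m + 1)) := by
  have h1 := Finset.prod_range_succ (fun i => p (m + i)) (m + 1)
  have h2 := Finset.prod_range_succ' (fun i => p (m + i)) (m + 1)
  rw [h1, Finset.prod_range_succ] at h2
  simp only [add_zero] at h2
  rw [show m + (m + 1) = 2 * m + 1 by ring, show m + m = 2 * m by ring] at h2
  rw [← mul_assoc, h2]
  congr 1
  exact Finset.prod_congr rfl fun i _ => by congr 1; ring

/-- The ratio of consecutive normalizing factors; the product over the moving window of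
denominators telescopes by `prod_window_succ`. -/
theorem Dfac_succ (q c d α β : ℂ) (m : ℕ) (hE : qPoch q (α * β * c * d) (2 * m + 1) ≠ 0) :
    Dfac q c d α β (m + 1) = Dfac q c d α β m * (α ^ m * β ^ (m + 1) * q ^ (m * m) *
      (qPoch q (α * β) m * qPoch q (c * d) m * qPoch q q m * qPoch q (α * β * c * d) m /
        (qPoch q (α * β * c * d) (2 * m) * qPoch q (α * β * c * d) (2 * m + 1)))) := by
  have e2 := triangular_succ (m + 1)
  rw [Nat.add_sub_cancel, mul_comm (m + 1) m, mul_comm (m + 1 + 1)] at e2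
  have e1 := triangular_succ m
  have e3 := pyramidal_succ m
  have ne : ∀ j ≤ 2 * m + 1, qPoch q (α * β * c * d) j ≠ 0 := fun j hj => qPoch_ne_of_le hj hE
  have hR' := prod_window_succ (qPoch q (α * β * c * d)) m
  have n1 : ∏ i ∈ Finset.range (m + 1), qPoch q (α * β * c * d) (m + 1 + i) ≠ 0 :=
    Finset.prod_ne_zero_iff.2 fun i hi => ne _ (by have := Finset.mem_range.1 hi; omega)
  have n2 : ∏ i ∈ Finset.range m, qPoch q (α * β * c * d) (m + i) ≠ 0 :=
    Finset.prod_ne_zero_iff.2 fun i hi => ne _ (by have := Finset.mem_range.1 hi; omega)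
  have n3 := ne (2 * m) (by omega)
  simp only [Dfac, Nat.add_sub_cancel, e1, e2, e3, pow_add, Finset.prod_div_distrib]
  rw [Finset.prod_range_succ (fun i => qPoch q (α * β) i * qPoch q (c * d) i * qPoch q q i)]
  have hR2 : qPoch q (α * β * c * d) m / (qPoch q (α * β * c * d) (2 * m) *
      qPoch q (α * β * c * d) (2 * m + 1)) =
      (∏ i ∈ Finset.range m, qPoch q (α * β * c * d) (m + i)) /
      ∏ i ∈ Finset.range (m + 1), qPoch q (α * β * c * d) (m + 1 + i) := by
    rw [div_eq_div_iff (mul_ne_zero n3 hE) n1, mul_comm, hR']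
  rw [mul_div_assoc _ (qPoch q (α * β * c * d) m), hR2]
  generalize ∏ i ∈ Finset.range (m + 1), qPoch q (α * β * c * d) (m + 1 + i) = R1 at *
  generalize ∏ i ∈ Finset.range m, qPoch q (α * β * c * d) (m + i) = R2 at *
  generalize ∏ i ∈ Finset.range m, (qPoch q (α * β) i * qPoch q (c * d) i * qPoch q q i) = R3
  have hcancel : R3 / R1 = R3 / R2 * (R2 / R1) := by
    rw [div_mul_div_cancel₀ n2]
  rw [mul_div_right_comm, hcancel]
  ring

/-- Multiplicative second difference of `(x;q)_j` under `x ↦ x q`. -/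
theorem qPoch_mul_self (q x : ℂ) (j : ℕ) (h0 : 1 - x ≠ 0) (h1 : 1 - x * q ≠ 0)
    (h2 : 1 - x * q * q ^ j ≠ 0) :
    qPoch q (x * q) j * qPoch q (x * q) j =
      (1 - x * q ^ j) * (1 - x * q) / ((1 - x) * (1 - x * q * q ^ j)) *
        (qPoch q x j * qPoch q (x * q * q) j) := by
  rw [qPoch_shift q (x * q) j h1, qPoch_shift q x j h0]
  generalize 1 - x * q * q ^ j = g at *
  generalize 1 - x * q = g' at *
  field_simp

/-- Shifting `a` and `b` in separate factors against shifting both in the same factor. -/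
theorem Dfac_cross (q a b c d : ℂ) (m : ℕ) (hA : qPoch q (a * b) (2 * m + 2) ≠ 0)
    (hE : qPoch q (a * b * c * d) (2 * m + 2) ≠ 0) :
    Dfac q c d (a * q) b m * Dfac q c d a (b * q) m =
      ((1 - a * b * q) / (1 - a * b)) ^ m *
        ((1 - a * b * c * d) / (1 - a * b * c * d * q)) ^ m *
        ((1 - a * b) * (1 - a * b * c * d * q ^ (2 * m)) /
          ((1 - a * b * q ^ m) * (1 - a * b * c * d * q ^ m))) *
        (Dfac q c d a b m * Dfac q c d (a * q) (b * q) m) := by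
  have a0 : 1 - a * b ≠ 0 := by simpa using one_sub_ne (show 0 < 2 * m + 2 by omega) hA
  have a1 : 1 - a * b * q ≠ 0 := by simpa using one_sub_ne (show 1 < 2 * m + 2 by omega) hA
  have e0 : 1 - a * b * c * d ≠ 0 := by
    simpa using one_sub_ne (show 0 < 2 * m + 2 by omega) hE
  have e1 : 1 - a * b * c * d * q ≠ 0 := by
    simpa using one_sub_ne (show 1 < 2 * m + 2 by omega) hE
  induction m with
  | zero => simp [Dfac, a0, e0]
  | succ m ih =>
    replace ih := ih (qPoch_ne_of_le (by omega) hA) (qPoch_ne_of_le (by omega) hE)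
    have hEq : ∀ j ≤ 2 * m + 3, qPoch q (a * b * c * d * q) j ≠ 0 := fun j hj => by
      have := qPoch_ne_of_le (show j + 1 ≤ 2 * (m + 1) + 2 by omega) hE
      rw [qPoch_succ'] at this
      exact right_ne_zero_of_mul this
    have hEqq : ∀ j ≤ 2 * m + 2, qPoch q (a * b * c * d * q * q) j ≠ 0 := fun j hj => by
      have := hEq (j + 1) (by omega)
      rw [qPoch_succ'] at this
      exact right_ne_zero_of_mul this
    have eA1 : a * q * b = a * b * q := by ring
    have eA2 : a * (b * q) = a * b * q := by ring
    have eA3 : a * q * (b * q) = a * b * q * q := by ring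
    have eE1 : a * b * q * c * d = a * b * c * d * q := by ring
    have eE2 : a * b * q * q * c * d = a * b * c * d * q * q := by ring
    have s1 := Dfac_succ q c d (a * q) b m (by rw [eA1, eE1]; exact hEq _ (by omega))
    have s2 := Dfac_succ q c d a (b * q) m (by rw [eA2, eE1]; exact hEq _ (by omega))
    have s3 := Dfac_succ q c d a b m (qPoch_ne_of_le (by omega) hE)
    have s4 := Dfac_succ q c d (a * q) (b * q) m
      (by rw [eA3, eE2]; exact hEqq _ (by omega))
    rw [eA1, eE1] at s1
    rw [eA2, eE1] at s2
    rw [eA3, eE2] at s4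
    have hAj : ∀ j ≤ m + 1, 1 - a * b * q ^ j ≠ 0 := fun j hj => one_sub_ne (by omega) hA
    have hEj : ∀ j ≤ 2 * m + 2, 1 - a * b * c * d * q ^ j ≠ 0 :=
      fun j hj => one_sub_ne (by omega) hE
    have hs : ∀ (x : ℂ) (j : ℕ), x * q * q ^ j = x * q ^ (j + 1) := fun x j => by ring
    have rA := qPoch_mul_self q (a * b) m a0 a1 (by rw [hs]; exact hAj _ (by omega))
    have rM := qPoch_mul_self q (a * b * c * d) m e0 e1 (by rw [hs]; exact hEj _ (by omega))
    have rV := qPoch_mul_self q (a * b * c * d) (2 * m) e0 e1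
      (by rw [hs]; exact hEj _ (by omega))
    have rW := qPoch_mul_self q (a * b * c * d) (2 * m + 1) e0 e1
      (by rw [hs]; exact hEj _ (by omega))
    rw [hs] at rA rM rV rW
    have hp : (a * q) ^ m * b ^ (m + 1) * (a ^ m * (b * q) ^ (m + 1)) =
        a ^ m * b ^ (m + 1) * ((a * q) ^ m * (b * q) ^ (m + 1)) := by ring
    have t1 := hAj m (by omega)
    have t2 := hAj (m + 1) le_rfl
    have t3 := hEj m (by omega)
    have t4 := hEj (m + 1) (by omega)
    have t5 := hEj (2 * m) (by omega)
    have t6 := hEj (2 * m + 1) (by omega)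
    have t7 := hEj (2 * m + 1 + 1) (by omega)
    rw [s1, s2, s3, s4, show 2 * (m + 1) = 2 * m + 1 + 1 by ring]
    clear s1 s2 s3 s4 hAj hEj hEq hEqq hs hA hE
    generalize Dfac q c d (a * q) b m = D1 at *
    generalize Dfac q c d a (b * q) m = D2 at *
    generalize Dfac q c d a b m = D3 at *
    generalize Dfac q c d (a * q) (b * q) m = D4 at *
    generalize qPoch q (a * b * c * d * q) m = M1 at *
    generalize qPoch q (a * b * c * d * q) (2 * m) = V1 at *
    generalize qPoch q (a * b * c * d * q) (2 * m + 1) = W1 at *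
    generalize qPoch q (a * b * q) m = A1 at *
    generalize qPoch q (a * b * c * d * q * q) m = M2 at *
    generalize qPoch q (a * b * c * d * q * q) (2 * m) = V2 at *
    generalize qPoch q (a * b * c * d * q * q) (2 * m + 1) = W2 at *
    generalize qPoch q (a * b * q * q) m = A2 at *
    generalize qPoch q (a * b * c * d) m = M0 at *
    generalize qPoch q (a * b * c * d) (2 * m) = V0 at *
    generalize qPoch q (a * b * c * d) (2 * m + 1) = W0 at *
    generalize qPoch q (a * b) m = A0 at *
    generalize qPoch q (c * d) m = C at *
    generalize qPoch q q m = Q at *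
    generalize 1 - a * b * c * d * q ^ (2 * m + 1 + 1) = g7 at *
    generalize 1 - a * b * c * d * q ^ (2 * m + 1) = g6 at *
    generalize 1 - a * b * c * d * q ^ (2 * m) = g5 at *
    generalize 1 - a * b * c * d * q ^ (m + 1) = g4 at *
    generalize 1 - a * b * c * d * q ^ m = g3 at *
    generalize 1 - a * b * q ^ (m + 1) = g2 at *
    generalize 1 - a * b * q ^ m = g1 at *
    generalize 1 - a * b * c * d * q = h3 at *
    generalize 1 - a * b * c * d = h2 at *
    generalize 1 - a * b * q = h1 at *
    generalize 1 - a * b = h0 at *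
    generalize q ^ (m * m) = z at *
    generalize (a * q) ^ m = p1 at *
    generalize (b * q) ^ (m + 1) = p2 at *
    generalize a ^ m = p3 at *
    generalize b ^ (m + 1) = p4 at *
    calc _ = (D1 * D2) * (p1 * p4 * (p3 * p2)) * z ^ 2 * C ^ 2 * Q ^ 2 *
          ((A1 * A1) * (M1 * M1) / ((V1 * V1) * (W1 * W1))) := by ring
      _ = (h1 / h0) ^ m * (h2 / h3) ^ m * (D3 * D4) * (p3 * p4 * (p1 * p2)) * z ^ 2 * C ^ 2 *
          Q ^ 2 * (A0 * A2 * (M0 * M2) / (V0 * V2 * (W0 * W2))) *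
          (h0 * g5 / (g1 * g3) * (g1 * h1 / (h0 * g2)) * (g3 * h3 / (h2 * g4)) /
            ((g5 * h3 / (h2 * g6)) * (g6 * h3 / (h2 * g7)))) := by
        rw [ih, hp, rA, rM, rV, rW]
        ring
      _ = (h1 / h0) ^ m * (h2 / h3) ^ m * (D3 * D4) * (p3 * p4 * (p1 * p2)) * z ^ 2 * C ^ 2 *
          Q ^ 2 * (A0 * A2 * (M0 * M2) / (V0 * V2 * (W0 * W2))) *
          ((h1 / h0) * (h2 / h3) * (h0 * g7 / (g2 * g4))) := by
        congr 1
        field_simp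
      _ = _ := by
        rw [pow_succ, pow_succ]
        ring

/-! ### Askey-Wilson polynomials and their prefactors -/

/-- The prefactor `a^{-n} (ab, ac, ad; q)_n` of the Askey-Wilson polynomial, so that the
polynomial is this times a terminating `₄φ₃`. -/
noncomputable def awPre (q a b c d : ℂ) (n : ℕ) : ℂ :=
  (a ^ n)⁻¹ * (qPoch q (a * b) n * qPoch q (a * c) n * qPoch q (a * d) n)

/-- An Askey-Wilson polynomial as a prefactor times a series, with the parameters `P = q ^ (-n)` and
`F = abcd q ^ (n - 1)` characterized by equations free of negative powers. -/
theorem awPoly_eq {q a b c d z P F A C D u v : ℂ} (hq : q ≠ 0) (n : ℕ) (hP : P * q ^ n = 1)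
    (hF : F * q = a * b * c * d * q ^ n) (hA : a * b = A) (hC : a * c = C) (hD : a * d = D)
    (hu : a * z = u) (hv : a / z = v) :
    awPoly q a b c d z n = awPre q a b c d n * phi q P F A C D u v (n + 1) := by
  subst hA hC hD hu hv
  have hF' : a * b * c * d * q ^ ((n : ℤ) - 1) = F := by
    rw [zpow_sub₀ hq, zpow_natCast, zpow_one, ← mul_div_assoc, ← hF, mul_div_cancel_right₀ _ hq]
  simp only [awPoly, awPre, phi, term, hF', zpow_neg, zpow_natCast,
    ← eq_inv_of_mul_eq_one_left hP]

/-- The counterpart of `Dfac_cross` for the prefactors; the factors involving `c` and `d` agree on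
both sides. -/
theorem awPre_cross (q a b c d : ℂ) (m : ℕ) (h0 : 1 - a * b ≠ 0) (h1 : 1 - a * b * q ≠ 0)
    (h2 : 1 - a * b * q * q ^ m ≠ 0) :
    awPre q a (b * q) c d m * awPre q (a * q) b c d m =
      (1 - a * b * q ^ m) * (1 - a * b * q) / ((1 - a * b) * (1 - a * b * q * q ^ m)) *
        (awPre q a b c d m * awPre q (a * q) (b * q) c d m) := by
  have := qPoch_mul_self q (a * b) m h0 h1 h2
  simp only [awPre]
  rw [show a * q * b = a * b * q by ring, show a * (b * q) = a * b * q by ring,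
    show a * q * (b * q) = a * b * q * q by ring]
  linear_combination (a ^ m)⁻¹ * ((a * q) ^ m)⁻¹ * qPoch q (a * c) m * qPoch q (a * d) m *
    qPoch q (a * q * c) m * qPoch q (a * q * d) m * this

/-- The normalizations of degrees `(k + 2, k)` against those of degrees `(k + 1, k + 1)`. The factor
`1 - c d q ^ k` may vanish, so the ratio is usable only in this direction. -/
theorem Dfac_awPre_ratio (q a b c d : ℂ) (k : ℕ) (hq : q ≠ 0) (ha : a ≠ 0)
    (hA : qPoch q (a * b) (k + 3) ≠ 0) (hE : qPoch q (a * b * c * d) (2 * k + 4) ≠ 0) :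
    Dfac q c d a b (k + 2) * Dfac q c d (a * q) (b * q) k *
        (awPre q a b c d (k + 2) * awPre q (a * q) (b * q) c d k) =
      a * b * q * (1 - c * d * q ^ k) * (1 - q ^ (k + 1)) * ((1 - a * b) * (1 - a * b * q)) /
        ((1 - a * b * q ^ (k + 2)) * (1 - a * b * c * d * q ^ (k + 1)) *
          ((1 - a * b * c * d) * (1 - a * b * c * d * q))) *
        (Dfac q c d a b (k + 1) * Dfac q c d (a * q) (b * q) (k + 1) *
          (awPre q a b c d (k + 1) * awPre q (a * q) (b * q) c d (k + 1))) := by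
  have hE2 : ∀ j, qPoch q (a * b * c * d) (j + 2) =
      (1 - a * b * c * d) * (1 - a * b * c * d * q) * qPoch q (a * b * c * d * q * q) j :=
    fun j => by rw [qPoch_succ', qPoch_succ']; exact (mul_assoc _ _ _).symm
  have hEqq : ∀ j ≤ 2 * k + 2, qPoch q (a * b * c * d * q * q) j ≠ 0 := fun j hj => by
    have := qPoch_ne_of_le (show j + 2 ≤ 2 * k + 4 by omega) hE
    rw [hE2] at this
    exact right_ne_zero_of_mul this
  have eA3 : a * q * (b * q) = a * b * q * q := by ring
  have eE2 : a * b * q * q * c * d = a * b * c * d * q * q := by ring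
  have s3 := Dfac_succ q c d a b (k + 1) (qPoch_ne_of_le (by omega) hE)
  have s4 := Dfac_succ q c d (a * q) (b * q) k
    (by rw [eA3, eE2]; exact hEqq _ (by omega))
  rw [eA3, eE2] at s4
  have e0 : 1 - a * b * c * d ≠ 0 := by
    simpa using one_sub_ne (show 0 < 2 * k + 4 by omega) hE
  have e1 : 1 - a * b * c * d * q ≠ 0 := by
    simpa using one_sub_ne (show 1 < 2 * k + 4 by omega) hE
  have e2 : 1 - a * b * c * d * q ^ (k + 1) ≠ 0 := one_sub_ne (by omega) hE
  have a2 : 1 - a * b * q ^ (k + 2) ≠ 0 := one_sub_ne (by omega) hA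
  -- Comparing the two ways of splitting two factors off a shifted factorial of length `k + 2`.
  have rM : qPoch q (a * b * c * d) (k + 1) = (1 - a * b * c * d) * (1 - a * b * c * d * q) *
      qPoch q (a * b * c * d * q * q) k / (1 - a * b * c * d * q ^ (k + 1)) := by
    rw [eq_div_iff e2, ← hE2, ← qPoch_succ]
  have rA : qPoch q (a * b) (k + 1) * (1 - a * b * q ^ (k + 1)) =
      (1 - a * b) * (1 - a * b * q) * qPoch q (a * b * q * q) k := by
    rw [← qPoch_succ, qPoch_succ', qPoch_succ']; exact (mul_assoc _ _ _).symm
  have rA' : qPoch q (a * b * q * q) (k + 1) =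
      qPoch q (a * b * q * q) k * (1 - a * b * q ^ (k + 2)) := by
    rw [qPoch_succ]; ring
  have rC : ∀ x, qPoch q x (k + 2) * qPoch q (x * q) k =
      qPoch q x (k + 1) * qPoch q (x * q) (k + 1) := fun x => by
    rw [qPoch_succ q x (k + 1), qPoch_succ q (x * q) k]; ring
  have rc := rC (a * c)
  have rd := rC (a * d)
  have v1 := hEqq (2 * k) (by omega)
  have v2 := hEqq (2 * k + 1) (by omega)
  rw [s3, s4]
  simp only [awPre]
  rw [eA3, rM, rA', show 2 * (k + 1) = 2 * k + 2 by ring, hE2,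
    show 2 * k + 2 + 1 = 2 * k + 1 + 2 by ring, hE2,
    show a * q * c = a * c * q by ring, show a * q * d = a * d * q by ring,
    qPoch_succ q (a * b) (k + 1), qPoch_succ q (c * d) k, qPoch_succ q q k, rA]
  have hpow : a ^ (k + 1) * b ^ (k + 1 + 1) * q ^ ((k + 1) * (k + 1)) *
      ((a ^ (k + 2))⁻¹ * ((a * q) ^ k)⁻¹) = a * b * q *
      ((a * q) ^ k * (b * q) ^ (k + 1) * q ^ (k * k) * ((a ^ (k + 1))⁻¹ * ((a * q) ^ (k + 1))⁻¹)) := by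
    rw [show (k + 1) * (k + 1) = k * k + k + k + 1 by ring]
    simp only [mul_pow, pow_add, pow_one, pow_two]
    have := pow_ne_zero k ha
    have := pow_ne_zero k hq
    generalize q ^ (k * k) = r1 at *
    generalize q ^ k = r2 at *
    generalize a ^ k = r3 at *
    generalize b ^ k = r4 at *
    field_simp
  rw [← pow_succ' q k]
  clear s3 s4 rM rA rA' hEqq hE2 hA hE rC
  generalize Dfac q c d a b (k + 1) = D1 at *
  generalize Dfac q c d (a * q) (b * q) k = D2 at *
  generalize a ^ (k + 1) * b ^ (k + 1 + 1) * q ^ ((k + 1) * (k + 1)) = P1 at *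
  generalize (a * q) ^ k * (b * q) ^ (k + 1) * q ^ (k * k) = P2 at *
  generalize (a ^ (k + 2))⁻¹ = i1 at *
  generalize ((a * q) ^ k)⁻¹ = i2 at *
  generalize (a ^ (k + 1))⁻¹ = i3 at *
  generalize ((a * q) ^ (k + 1))⁻¹ = i4 at *
  generalize qPoch q (a * c) (k + 2) = c1 at *
  generalize qPoch q (a * c) (k + 1) = c2 at *
  generalize qPoch q (a * c * q) (k + 1) = c3 at *
  generalize qPoch q (a * c * q) k = c4 at *
  generalize qPoch q (a * d) (k + 2) = d1 at *
  generalize qPoch q (a * d) (k + 1) = d2 at *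
  generalize qPoch q (a * d * q) (k + 1) = d3 at *
  generalize qPoch q (a * d * q) k = d4 at *
  generalize qPoch q (a * b * q * q) k = A2 at *
  generalize qPoch q (a * b) (k + 1) = A0 at *
  generalize qPoch q (a * b * c * d * q * q) (2 * k + 1) = W at *
  generalize qPoch q (a * b * c * d * q * q) (2 * k) = V at *
  generalize qPoch q (a * b * c * d * q * q) k = M at *
  generalize qPoch q (c * d) k = C at *
  generalize qPoch q q k = Q at *
  generalize 1 - a * b * c * d * q ^ (k + 1) = g3 at *
  generalize 1 - a * b * q ^ (k + 2) = g2 at *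
  generalize 1 - a * b * c * d * q = h3 at *
  generalize 1 - a * b * c * d = h2 at *
  generalize 1 - a * b * q = h1 at *
  generalize 1 - a * b = h0 at *
  generalize 1 - c * d * q ^ k = x1 at *
  generalize 1 - q ^ (k + 1) = x2 at *
  generalize a * b * q = abq at *
  calc _ = D1 * D2 * (P1 * (i1 * i2)) * (c1 * c4) * (d1 * d4) * A0 * A2 * C * x1 * Q * x2 *
        (h0 * h1 * A2) * M * (h2 * h3 / (h2 * h3) / (h2 * h3)) / (g3 * W * V) := by ring
    _ = D1 * D2 * (abq * (P2 * (i3 * i4))) * (c2 * c3) * (d2 * d3) * A0 * A2 * C * x1 * Q * x2 *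
        (h0 * h1 * A2) * M * (1 / (h2 * h3)) / (g3 * W * V) * (g2 / g2) := by
      rw [hpow, rc, rd, div_self (mul_ne_zero e0 e1), div_self a2, mul_one]
    _ = _ := by ring

/-! ### The quadratic relation -/

/-- Elimination of `w` from three linear relations, with the normalizing factors carried along:
the sums are `S₂ = G + K₂ w A`, `S₁ = G + K₃ w B` and `H = l A + m B`, and the products of
prefactors are all proportional to `(D₁ D₁') (p₁ p₁')`. -/
theorem eliminate {D₂ D₀ D₁ D₁' E E' p₂ p₀ p₁ p₁' o o' G A B H l m K₂ K₃ w κ t f r g s S : ℂ}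
    (hR : D₂ * D₀ * (p₂ * p₀) = κ * t * (D₁ * D₁' * (p₁ * p₁')))
    (hX : E * E' = S * f * (D₁ * D₁')) (hY : o * o' = r * (p₁ * p₁'))
    (hS : g * s * S = t) (hH : H = l * A + m * B)
    (k1 : f * r * l = 1) (k2 : κ = -(f * r) * m) (k3 : K₂ * m = -(K₃ * l)) :
    D₂ * D₀ * (p₂ * (G + K₂ * w * A)) * (p₀ * B) =
      t * (D₁ * D₁' * (p₁ * (G + K₃ * w * B)) * (p₁' * A)) -
        g * s * (E * E' * (o * G) * (o' * H)) := by
  have hκ : κ * K₂ = K₃ := by linear_combination K₂ * k2 - f * r * k3 + K₃ * k1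
  calc _ = D₂ * D₀ * (p₂ * p₀) * ((G + K₂ * w * A) * B) := by ring
    _ = t * (D₁ * D₁' * (p₁ * p₁')) * (κ * G * B + κ * K₂ * w * A * B) := by rw [hR]; ring
    _ = t * (D₁ * D₁' * (p₁ * p₁')) *
          ((G + K₃ * w * B) * A - G * (f * r * l * A + f * r * m * B)) := by
      rw [hκ, k1, k2]; ring
    _ = t * (D₁ * D₁' * (p₁ * p₁')) * ((G + K₃ * w * B) * A) -
          g * s * (E * E') * (o * o') * (G * H) := by
      rw [hX, hY, hH, ← hS]; ring
    _ = _ := by ring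

/-- The key identity (3.6): the quadratic relation for Askey-Wilson polynomials
multiplied through by the normalizing factors `D`. -/
theorem D_weighted_quadratic_relation
    (q a b c d z : ℂ) (hq : q ≠ 0) (ha : a ≠ 0) (hb : b ≠ 0) (hc : c ≠ 0) (hd : d ≠ 0)
    (x : ℂ) (hx : x = (z + z⁻¹) / 2) (n : ℕ) (hn : 2 ≤ n)
    (h1 : 1 - a * b * c * d ≠ 0) (h2 : 1 - a * b * q ≠ 0)
    (hden : ∀ k ≤ 2 * n,
      qPoch q q k ≠ 0 ∧ qPoch q (a * b * c * d) k ≠ 0 ∧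
      qPoch q (a * b * c * d * q) k ≠ 0 ∧ qPoch q (a * b * c * d * q ^ 2) k ≠ 0 ∧
      qPoch q (a * b) k ≠ 0 ∧ qPoch q (a * b * q) k ≠ 0 ∧ qPoch q (a * b * q ^ 2) k ≠ 0 ∧
      qPoch q (a * c) k ≠ 0 ∧ qPoch q (a * d) k ≠ 0 ∧
      qPoch q (a * c * q) k ≠ 0 ∧ qPoch q (a * d * q) k ≠ 0) :
    Dfac q c d a b n * Dfac q c d (a * q) (b * q) (n - 2) *
        awPoly q a b c d z n * awPoly q (a * q) (b * q) c d z (n - 2)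
      = qPoch q (a * b) 2 / qPoch q (a * b * c * d) 2 *
          (Dfac q c d a b (n - 1) * Dfac q c d (a * q) (b * q) (n - 1) *
            awPoly q a b c d z (n - 1) * awPoly q (a * q) (b * q) c d z (n - 1))
        - ((1 - a * b) / (1 - a * b * c * d)) ^ n *
            ((1 - a * b * c * d * q) / (1 - a * b * q)) ^ (n - 2) *
            (Dfac q c d (a * q) b (n - 1) * Dfac q c d a (b * q) (n - 1) *
              awPoly q a (b * q) c d z (n - 1) * awPoly q (a * q) b c d z (n - 1)) := by
  obtain ⟨k, rfl⟩ : ∃ k, n = k + 2 := ⟨n - 2, by omega⟩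
  rw [show k + 2 - 2 = k by omega, show k + 2 - 1 = k + 1 by omega]
  obtain ⟨nq, nE, -, -, nA, -, -, nC, nD, -, -⟩ := hden (2 * (k + 2)) le_rfl
  clear hden
  have sE := one_sub_ne (show 2 * k + 2 < 2 * (k + 2) by omega) nE
  have sE1 := one_sub_ne (show k + 1 < 2 * (k + 2) by omega) nE
  have sE' : 1 - a * b * c * d * q ≠ 0 := by
    simpa using one_sub_ne (show 1 < 2 * (k + 2) by omega) nE
  have sA : 1 - a * b ≠ 0 := by simpa using one_sub_ne (show 0 < 2 * (k + 2) by omega) nA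
  have sA1 := one_sub_ne (show k + 1 < 2 * (k + 2) by omega) nA
  have sA2 := one_sub_ne (show k + 2 < 2 * (k + 2) by omega) nA
  have Aq : qPoch q (a * b * q) (k + 3) ≠ 0 := by
    have := qPoch_ne_of_le (show k + 3 + 1 ≤ 2 * (k + 2) by omega) nA
    rw [qPoch_succ'] at this
    exact right_ne_zero_of_mul this
  have hqk := pow_ne_zero k hq
  obtain ⟨P, hP⟩ : ∃ P, P = (q ^ (k + 2))⁻¹ := ⟨_, rfl⟩
  obtain ⟨G, hG⟩ : ∃ G, G = a * b * c * d * q ^ k := ⟨_, rfl⟩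
  have hP0 : P * q ^ (k + 2) = 1 := by rw [hP, inv_mul_cancel₀ (pow_ne_zero _ hq)]
  have hP1 : P * q * q ^ (k + 1) = 1 := by rw [← hP0]; ring
  have hP2 : P * q * q * q ^ k = 1 := by rw [← hP0]; ring
  have hPF : P * q - G * q ≠ 0 := by
    intro h
    apply sE
    rw [← hP1, sub_eq_zero.1 h, hG]
    ring
  -- All six polynomials as terminating series with parameters shifted from `P, G, ab, ac, ad`.
  have f1 : awPoly q a b c d z (k + 2) = awPre q a b c d (k + 2) *
      phi q P (G * q) (a * b) (a * c) (a * d) (a * z) (a / z) (k + 2 + 1) :=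
    awPoly_eq hq _ hP0 (by rw [hG]; ring) rfl rfl rfl rfl rfl
  have f2 : awPoly q (a * q) (b * q) c d z k = awPre q (a * q) (b * q) c d k *
      phi q (P * q * q) (G * q) (a * b * q * q) (a * c * q) (a * d * q) (a * z * q) (a / z * q)
        (k + 1) :=
    awPoly_eq hq _ hP2 (by rw [hG]; ring) (by ring) (by ring) (by ring) (by ring) (by ring)
  have f3 : awPoly q a b c d z (k + 1) = awPre q a b c d (k + 1) *
      phi q (P * q) G (a * b) (a * c) (a * d) (a * z) (a / z) (k + 1 + 1) :=
    awPoly_eq hq _ hP1 (by rw [hG]; ring) rfl rfl rfl rfl rfl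
  have f4 : awPoly q (a * q) (b * q) c d z (k + 1) = awPre q (a * q) (b * q) c d (k + 1) *
      phi q (P * q) (G * q * q) (a * b * q * q) (a * c * q) (a * d * q) (a * z * q) (a / z * q)
        (k + 1 + 1) :=
    awPoly_eq hq _ hP1 (by rw [hG]; ring) (by ring) (by ring) (by ring) (by ring) (by ring)
  have f5 : awPoly q a (b * q) c d z (k + 1) = awPre q a (b * q) c d (k + 1) *
      phi q (P * q) (G * q) (a * b * q) (a * c) (a * d) (a * z) (a / z) (k + 1 + 1) :=
    awPoly_eq hq _ hP1 (by rw [hG]; ring) (by ring) rfl rfl rfl rfl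
  have f6 : awPoly q (a * q) b c d z (k + 1) = awPre q (a * q) b c d (k + 1) *
      phi q (P * q) (G * q) (a * b * q) (a * c * q) (a * d * q) (a * z * q) (a / z * q)
        (k + 1 + 1) :=
    awPoly_eq hq _ hP1 (by rw [hG]; ring) (by ring) (by ring) (by ring) (by ring) (by ring)
  have le2 {x : ℂ} (h : qPoch q x (2 * (k + 2)) ≠ 0) {j : ℕ} (hj : j ≤ 2 * (k + 2)) :
      qPoch q x j ≠ 0 := qPoch_ne_of_le hj h
  -- The three contiguous relations. Series with numerator parameter `q ^ (-j)` are truncated just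
  -- after index `j`, so that all relations refer to the same partial sums; `r3` applies the first
  -- relation with the roles of `P` and `F` exchanged.
  have r2 := phi_contig_two (P := P) (F := G * q) (u := a * z) (v := a / z) (N := k + 2)
    (le2 nq (by omega)) (le2 nA (by omega)) h2 (le2 nC (by omega)) (le2 nD (by omega))
  rw [phi_succ_of_zero (P := P * q) _ _ _ _ _ _ (show k + 1 < k + 2 by omega) hP1] at r2
  have r3 := phi_contig_two (P := G) (F := P * q) (u := a * z) (v := a / z) (N := k + 1)
    (le2 nq (by omega)) (le2 nA (by omega)) h2 (le2 nC (by omega)) (le2 nD (by omega))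
  rw [phi_swap q G, phi_swap q (G * q), phi_swap q (G * q)] at r3
  have r1 := phi_contig_one (C := a * c * q) (D := a * d * q) (u := a * z * q)
    (v := a / z * q) (N := k + 2) hPF Aq
  rw [phi_succ_of_zero (P := P * q * q) _ _ _ _ _ _ (show k < k + 1 by omega) hP2] at r1
  have hs : ∀ (x : ℂ) (j : ℕ), x * q * q ^ j = x * q ^ (j + 1) := fun x j => by ring
  have hR := Dfac_awPre_ratio q a b c d k hq ha (le2 nA (by omega)) (le2 nE (by omega))
  have hX := Dfac_cross q a b c d (k + 1) (le2 nA (by omega)) (le2 nE (by omega))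
  have hY := awPre_cross q a b c d (k + 1) sA h2 (by rw [hs]; exact sA2)
  rw [hs] at hY
  have hpq : qPoch q (a * b) 2 / qPoch q (a * b * c * d) 2 =
      (1 - a * b) * (1 - a * b * q) / ((1 - a * b * c * d) * (1 - a * b * c * d * q)) := by
    simp [qPoch, Finset.prod_range_succ]
  have hpows : ((1 - a * b) / (1 - a * b * c * d)) ^ (k + 2) *
      ((1 - a * b * c * d * q) / (1 - a * b * q)) ^ k *
      (((1 - a * b * q) / (1 - a * b)) ^ (k + 1) *
        ((1 - a * b * c * d) / (1 - a * b * c * d * q)) ^ (k + 1)) =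
      (1 - a * b) * (1 - a * b * q) / ((1 - a * b * c * d) * (1 - a * b * c * d * q)) := by
    clear * - h1 h2 sE' sA
    generalize 1 - a * b * c * d * q = t3 at *
    generalize 1 - a * b * c * d = t2 at *
    generalize 1 - a * b * q = t1 at *
    generalize 1 - a * b = t0 at *
    -- The four bases raised to the power `k` multiply to `1`.
    calc _ = (t0 / t2 * (t3 / t1) * (t1 / t0) * (t2 / t3)) ^ k *
          ((t0 / t2) ^ 2 * (t1 / t0) * (t2 / t3)) := by ring
      _ = _ := by
        rw [show t0 / t2 * (t3 / t1) * (t1 / t0) * (t2 / t3) = 1 by field_simp, one_pow]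
        field_simp
  have hY0 := pow_ne_zero (k + 1) hq
  have z0 : P * q = (q ^ (k + 1))⁻¹ := eq_inv_of_mul_eq_one_left hP1
  have z1 : P * q - G * q = (1 - a * b * c * d * q ^ (2 * (k + 1))) / q ^ (k + 1) := by
    rw [eq_div_iff hY0, sub_mul, hP1, hG]; ring
  have z2 : P * q - a * b * q = (1 - a * b * q ^ (k + 2)) / q ^ (k + 1) := by
    rw [eq_div_iff hY0, sub_mul, hP1]; ring
  have z3 : 1 - G * q = 1 - a * b * c * d * q ^ (k + 1) := by rw [hG]; ring
  have z4 : 1 - P * q = -(1 - q ^ (k + 1)) / q ^ (k + 1) := by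
    rw [eq_div_iff hY0, sub_mul, hP1]; ring
  have z5 : G * q - a * b * q = -(a * b * q) * (1 - c * d * q ^ k) := by rw [hG]; ring
  have z6 : G * q - P * q = -((1 - a * b * c * d * q ^ (2 * (k + 1))) / q ^ (k + 1)) := by
    rw [← z1]; ring
  have sE2 : 1 - a * b * c * d * q ^ (2 * (k + 1)) ≠ 0 := sE
  -- The coefficient identities that make the combination of the contiguous relations close up.
  have k1 : (1 - a * b) * (1 - a * b * c * d * q ^ (2 * (k + 1))) /
      ((1 - a * b * q ^ (k + 1)) * (1 - a * b * c * d * q ^ (k + 1))) *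
      ((1 - a * b * q ^ (k + 1)) * (1 - a * b * q) /
        ((1 - a * b) * (1 - a * b * q ^ (k + 1 + 1)))) *
      ((1 - G * q) * (P * q - a * b * q) / ((1 - a * b * q) * (P * q - G * q))) = 1 := by
    rw [z1, z2, z3]
    clear * - sE2 sE1 sA sA1 sA2 h2 hY0
    generalize 1 - a * b * c * d * q ^ (2 * (k + 1)) = g4 at *
    generalize 1 - a * b * c * d * q ^ (k + 1) = g3 at *
    generalize 1 - a * b * q ^ (k + 2) = g2 at *
    generalize 1 - a * b * q ^ (k + 1) = g1 at *
    generalize 1 - a * b * q = t1 at *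
    generalize 1 - a * b = t0 at *
    generalize q ^ (k + 1) = Y at *
    field_simp
  have k2 : a * b * q * (1 - c * d * q ^ k) * (1 - q ^ (k + 1)) /
        ((1 - a * b * q ^ (k + 2)) * (1 - a * b * c * d * q ^ (k + 1))) =
      -((1 - a * b) * (1 - a * b * c * d * q ^ (2 * (k + 1))) /
      ((1 - a * b * q ^ (k + 1)) * (1 - a * b * c * d * q ^ (k + 1))) *
      ((1 - a * b * q ^ (k + 1)) * (1 - a * b * q) /
        ((1 - a * b) * (1 - a * b * q ^ (k + 1 + 1))))) *
      ((1 - P * q) * (G * q - a * b * q) / ((1 - a * b * q) * (G * q - P * q))) := by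
    rw [z4, z5, z6]
    clear * - sE2 sE1 sA sA1 sA2 h2 hY0
    generalize 1 - a * b * c * d * q ^ (2 * (k + 1)) = g4 at *
    generalize 1 - a * b * c * d * q ^ (k + 1) = g3 at *
    generalize 1 - a * b * q ^ (k + 2) = g2 at *
    generalize 1 - a * b * q ^ (k + 1) = g1 at *
    generalize 1 - a * b * q = t1 at *
    generalize 1 - a * b = t0 at *
    generalize q ^ (k + 1) = Y at *
    generalize 1 - Y = x1
    generalize 1 - c * d * q ^ k = x2
    field_simp
  have k3 : q * (a * b - P) * (1 - G * q) /
        ((1 - a * b) * (1 - a * b * q) * (1 - a * c) * (1 - a * d)) *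
      ((1 - P * q) * (G * q - a * b * q) / ((1 - a * b * q) * (G * q - P * q))) =
      -(q * (a * b - G) * (1 - P * q) /
        ((1 - a * b) * (1 - a * b * q) * (1 - a * c) * (1 - a * d)) *
      ((1 - G * q) * (P * q - a * b * q) / ((1 - a * b * q) * (P * q - G * q)))) := by
    rw [← neg_sub (P * q) (G * q)]
    simp only [div_eq_mul_inv, mul_inv, inv_neg]
    ring
  rw [f1, f2, f3, f4, f5, f6, hpq]
  rw [r2, r3]
  rw [← div_mul_div_comm] at hR
  exact eliminate hR hX hY hpows r1 k1 k2 k3
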